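/- Let q ≥ 8 be an even prime power. The UnΓ-lines of the twisted cubic C form a single orbit under G_q, of size q³ − q, namely the orbit of the line ℓ through (0:0:0:1) and (1:0:1:0). Moreover, the stabilizer in G_q of any UnΓ-line is trivial. -/

import Mathlib

open Matrix Submodule

noncomputable section

/-- Row-vector action of an invertible matrix on subspaces of `F^4`:
a projectivity of `PG(3,q)` induced by the matrix. -/
def projAct (F : Type) [Field F] (A : GL (Fin 4) F) :
    Submodule F (Fin 4 → F) → Submodule F (Fin 4 → F) :=
  fun W => W.map (Matrix.vecMulLinear (A : Matrix (Fin 4) (Fin 4) F))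

/-- Representative vectors of the points of the twisted cubic. -/
def cubicVecs (F : Type) [Field F] : Set (Fin 4 → F) :=
  {v | (∃ t : F, v = ![t ^ 3, t ^ 2, t, 1]) ∨ v = ![1, 0, 0, 0]}

/-- The twisted cubic, as a set of projective points (1-dimensional subspaces). -/
def twistedCubic (F : Type) [Field F] : Set (Submodule F (Fin 4 → F)) :=
  (fun v => Submodule.span F {v}) '' cubicVecs F

/-- The group `G_q` of projectivities fixing the twisted cubic, modeled as those maps
on subspaces that are induced by an invertible matrix and map the cubic onto itself. -/
def Gq (F : Type) [Field F] :
    Set ((Submodule F (Fin 4 → F)) → (Submodule F (Fin 4 → F))) :=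
  {f | (∃ A : GL (Fin 4) F, f = projAct F A) ∧ f '' twistedCubic F = twistedCubic F}

def isPoint (F : Type) [Field F] (W : Submodule F (Fin 4 → F)) : Prop :=
  Module.finrank F W = 1

def isLine (F : Type) [Field F] (W : Submodule F (Fin 4 → F)) : Prop :=
  Module.finrank F W = 2

/-- The orbit of a line under `G_q`. -/
def lineOrbit (F : Type) [Field F] (ℓ : Submodule F (Fin 4 → F)) :
    Set (Submodule F (Fin 4 → F)) :=
  {m | ∃ f ∈ Gq F, f ℓ = m}

/-- The stabilizer of a line in `G_q`. -/
def lineStab (F : Type) [Field F] (ℓ : Submodule F (Fin 4 → F)) :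
    Set ((Submodule F (Fin 4 → F)) → (Submodule F (Fin 4 → F))) :=
  {f ∈ Gq F | f ℓ = ℓ}

/-- The linear form `y ↦ c0 y0 + c1 y1 + c2 y2 + c3 y3` defining a plane. -/
def planeForm (F : Type) [Field F] (c : Fin 4 → F) : (Fin 4 → F) →ₗ[F] F where
  toFun y := c 0 * y 0 + c 1 * y 1 + c 2 * y 2 + c 3 * y 3
  map_add' a b := by simp only [Pi.add_apply]; ring
  map_smul' r a := by simp only [Pi.smul_apply, smul_eq_mul, RingHom.id_apply]; ring

/-- The plane `π(c0,c1,c2,c3)`. -/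
def planeOf (F : Type) [Field F] (c : Fin 4 → F) : Submodule F (Fin 4 → F) :=
  LinearMap.ker (planeForm F c)

/-- The null polarity `𝔄`: the polar subspace of `W` w.r.t. the bilinear form
sending a point `(x0:x1:x2:x3)` to the plane `π(x3, −3x2, 3x1, −x0)`. -/
def nullPolarity (F : Type) [Field F] (W : Submodule F (Fin 4 → F)) :
    Submodule F (Fin 4 → F) :=
  ⨅ x ∈ (W : Set (Fin 4 → F)), planeOf F ![x 3, -(3 * x 2), 3 * x 1, -(x 0)]

/-- The tangent line to the twisted cubic at `P(t)`, `t ∈ F`. -/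
def tangentAt (F : Type) [Field F] (t : F) : Submodule F (Fin 4 → F) :=
  Submodule.span F {![t ^ 3, t ^ 2, t, 1], ![3 * t ^ 2, 2 * t, 1, 0]}

/-- The tangent line to the twisted cubic at `P(∞)`. -/
def tangentAtInf (F : Type) [Field F] : Submodule F (Fin 4 → F) :=
  Submodule.span F {![1, 0, 0, 0], ![0, 1, 0, 0]}

def isTangent (F : Type) [Field F] (ℓ : Submodule F (Fin 4 → F)) : Prop :=
  (∃ t : F, ℓ = tangentAt F t) ∨ ℓ = tangentAtInf F

/-- The osculating plane at `P(t)`, `t ∈ F`. -/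
def oscPlane (F : Type) [Field F] (t : F) : Submodule F (Fin 4 → F) :=
  planeOf F ![1, -(3 * t), 3 * t ^ 2, -(t ^ 3)]

/-- The osculating plane at `P(∞)`. -/
def oscPlaneInf (F : Type) [Field F] : Submodule F (Fin 4 → F) :=
  planeOf F ![0, 0, 0, 1]

def isOscPlane (F : Type) [Field F] (π : Submodule F (Fin 4 → F)) : Prop :=
  (∃ t : F, π = oscPlane F t) ∨ π = oscPlaneInf F

/-- A real chord: the line joining two distinct points of the twisted cubic. -/
def isRealChord (F : Type) [Field F] (ℓ : Submodule F (Fin 4 → F)) : Prop :=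
  ∃ u ∈ cubicVecs F, ∃ v ∈ cubicVecs F,
    Submodule.span F {u} ≠ Submodule.span F {v} ∧ ℓ = Submodule.span F {u, v}

/-- A real axis: the intersection of two distinct osculating planes. -/
def isRealAxis (F : Type) [Field F] (ℓ : Submodule F (Fin 4 → F)) : Prop :=
  ∃ π₁ π₂ : Submodule F (Fin 4 → F),
    isOscPlane F π₁ ∧ isOscPlane F π₂ ∧ π₁ ≠ π₂ ∧ ℓ = π₁ ⊓ π₂

/-- The `F_{q²}`-extension of a subspace of `F^4`. -/
def extendSub (F K : Type) [Field F] [Field K] [Algebra F K]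
    (W : Submodule F (Fin 4 → F)) : Submodule K (Fin 4 → K) :=
  Submodule.span K ((fun v i => algebraMap F K (v i)) '' (W : Set (Fin 4 → F)))

/-- An external line: a line containing no point of the twisted cubic. -/
def isExternal (F : Type) [Field F] (ℓ : Submodule F (Fin 4 → F)) : Prop :=
  isLine F ℓ ∧ ∀ P ∈ twistedCubic F, ¬ P ≤ ℓ

/-- An imaginary chord: a line disjoint from the cubic whose `F_{q²}`-extension joins a
pair of Frobenius-conjugate points `P(t)`, `P(t^q)` of the cubic over `F_{q²}`. -/
def isImagChord (F K : Type) [Field F] [Field K] [Algebra F K] (q : ℕ)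
    (ℓ : Submodule F (Fin 4 → F)) : Prop :=
  isExternal F ℓ ∧
  ∃ t : K, t ∉ Set.range (algebraMap F K) ∧
    extendSub F K ℓ =
      Submodule.span K
        ({![t ^ 3, t ^ 2, t, 1], ![(t ^ q) ^ 3, (t ^ q) ^ 2, t ^ q, 1]} :
          Set (Fin 4 → K))

/-- An imaginary axis: a line whose `F_{q²}`-extension is the intersection of a pair of
Frobenius-conjugate osculating planes `π_osc(t)`, `π_osc(t^q)` over `F_{q²}`. -/
def isImagAxis (F K : Type) [Field F] [Field K] [Algebra F K] (q : ℕ)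
    (ℓ : Submodule F (Fin 4 → F)) : Prop :=
  isLine F ℓ ∧
  ∃ t : K, t ∉ Set.range (algebraMap F K) ∧
    extendSub F K ℓ =
      planeOf K ![1, -(3 * t), 3 * t ^ 2, -(t ^ 3)] ⊓
        planeOf K ![1, -(3 * t ^ q), 3 * (t ^ q) ^ 2, -((t ^ q) ^ 3)]

/-- A unisecant: a line meeting the twisted cubic in exactly one point. -/
def isUnisecant (F : Type) [Field F] (ℓ : Submodule F (Fin 4 → F)) : Prop :=
  isLine F ℓ ∧ ∃! P, P ∈ twistedCubic F ∧ P ≤ ℓ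

/-- A `UΓ`-line: a non-tangent unisecant lying in some osculating plane. -/
def isUGamma (F : Type) [Field F] (ℓ : Submodule F (Fin 4 → F)) : Prop :=
  isUnisecant F ℓ ∧ ¬ isTangent F ℓ ∧ ∃ π, isOscPlane F π ∧ ℓ ≤ π

/-- A `UnΓ`-line: a non-tangent unisecant lying in no osculating plane. -/
def isUnGamma (F : Type) [Field F] (ℓ : Submodule F (Fin 4 → F)) : Prop :=
  isUnisecant F ℓ ∧ ¬ isTangent F ℓ ∧ ∀ π, isOscPlane F π → ¬ ℓ ≤ π

/-- An `EΓ`-line: an external line, other than an imaginary chord, lying in some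
osculating plane. -/
def isEGamma (F K : Type) [Field F] [Field K] [Algebra F K] (q : ℕ)
    (ℓ : Submodule F (Fin 4 → F)) : Prop :=
  isExternal F ℓ ∧ ¬ isImagChord F K q ℓ ∧ ∃ π, isOscPlane F π ∧ ℓ ≤ π

/-- For `q ≡ 0 (mod 3)`: the axis of `Γ`, the line `x0 = x3 = 0`. -/
def axisLine (F : Type) [Field F] : Submodule F (Fin 4 → F) :=
  Submodule.span F {![0, 1, 0, 0], ![0, 0, 1, 0]}

/-- For `q ≡ 0 (mod 3)`: an `EA`-line, i.e. an external line, other than an imaginary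
chord and other than the axis of `Γ`, meeting the axis of `Γ`. -/
def isEA (F K : Type) [Field F] [Field K] [Algebra F K] (q : ℕ)
    (ℓ : Submodule F (Fin 4 → F)) : Prop :=
  isExternal F ℓ ∧ ¬ isImagChord F K q ℓ ∧ ℓ ≠ axisLine F ∧ ℓ ⊓ axisLine F ≠ ⊥

end

/-!
`PGL(2,q)` acts on `PG(3,q)` through the symmetric cube and fixes the twisted cubic. Conversely, a
projectivity fixing the cubic can be composed with one of these so that it fixes `P(∞)` and
`P(0)`; writing out that it preserves the quadrics through the cubic, and comparing coefficients
of polynomials in `t` of degree at most five, shows that it is diagonal and comes from `PGL(2,q)`.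

After moving its point on the cubic to `P(0)`, a `UnΓ`-line is spanned by `P(0)` and some
`(1 : b : c : 0)` with `c ≠ b²`, and it is the image of `ℓ` under the matrix with rows `(1, b)` and
`(0, √(c - b²))`. In characteristic two square roots exist and are unique: existence gives
transitivity, uniqueness gives the triviality of the stabilizer of `ℓ`. The orbit therefore has
`|PGL(2,q)| = q³ - q` elements.
-/

section Algebra

variable {R : Type*} [CommRing R]

lemma eq_zero_of_forall_sum_pow_mul_eq_zero [IsDomain R] {n : ℕ} (hn : n ≤ ENat.card R)
    {c : Fin n → R} (h : ∀ t : R, ∑ i : Fin n, t ^ (i : ℕ) * c i = 0) : c = 0 := by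
  obtain ⟨e⟩ : Nonempty (Fin n ↪ R) := by
    rw [← Cardinal.lift_mk_le', Cardinal.mk_fin, Cardinal.lift_natCast, Cardinal.lift_uzero]
    exact Cardinal.natCast_le_toENat.mp hn
  exact Matrix.eq_zero_of_forall_index_sum_pow_mul_eq_zero e.injective fun j => h (e j)

section GeneralLinearGroup

variable {n : Type*} [Fintype n] [DecidableEq n]

lemma vecMulLinear_injective (A : GL n R) :
    Function.Injective (Matrix.vecMulLinear (A : Matrix n n R)) :=
  Matrix.vecMul_injective_of_isUnit A.isUnit

lemma vecMul_ne_zero (A : GL n R) {v : n → R} (hv : v ≠ 0) : v ᵥ* (A : Matrix n n R) ≠ 0 :=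
  fun h => hv (vecMulLinear_injective A (h.trans (Matrix.zero_vecMul _).symm))

lemma card_range_scalar {F : Type*} [Field F] [Fintype F] [Nonempty n] :
    Nat.card (Matrix.GeneralLinearGroup.scalar (R := F) n).range = Fintype.card F - 1 := by
  have hinj : Function.Injective (Matrix.GeneralLinearGroup.scalar (R := F) n) :=
    fun c d h => Units.ext (Matrix.scalar_inj.1 (congrArg Units.val h))
  rw [MonoidHom.range_eq_map, Subgroup.card_map_of_injective hinj, Subgroup.card_top,
    Nat.card_units, Nat.card_eq_fintype_card]

end GeneralLinearGroup

/-- The cubic Veronese map, a homogeneous parametrization of the twisted cubic: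
`P(t)` is spanned by `veronese ![t, 1]` and `P(∞)` by `veronese ![1, 0]`. -/
def veronese (p : Fin 2 → R) : Fin 4 → R :=
  ![p 0 ^ 3, p 0 ^ 2 * p 1, p 0 * p 1 ^ 2, p 1 ^ 3]

/-- Homogeneous coordinates of the osculating plane at the point spanned by `veronese p`. -/
def oscCoeff (p : Fin 2 → R) : Fin 4 → R :=
  ![p 1 ^ 3, -(3 * p 0 * p 1 ^ 2), 3 * p 0 ^ 2 * p 1, -(p 0 ^ 3)]

/-- The symmetric cube of a `2 × 2` matrix, in the basis in which the Veronese map is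
equivariant for the actions on row vectors. -/
def symCube : Matrix (Fin 2) (Fin 2) R →* Matrix (Fin 4) (Fin 4) R where
  toFun g :=
    let a := g 0 0; let b := g 0 1; let c := g 1 0; let d := g 1 1
    !![a ^ 3, a ^ 2 * b, a * b ^ 2, b ^ 3;
      3 * a ^ 2 * c, a ^ 2 * d + 2 * a * b * c, b ^ 2 * c + 2 * a * b * d, 3 * b ^ 2 * d;
      3 * a * c ^ 2, b * c ^ 2 + 2 * a * c * d, a * d ^ 2 + 2 * b * c * d, 3 * b * d ^ 2;
      c ^ 3, c ^ 2 * d, c * d ^ 2, d ^ 3]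
  map_one' := by
    ext i j
    fin_cases i <;> fin_cases j <;> simp
  map_mul' g h := by
    ext i j
    fin_cases i <;> fin_cases j <;> simp [Matrix.mul_apply, Fin.sum_univ_succ] <;> ring

/-- The symmetric cube representation of `GL₂` on row vectors of length four; it induces the
action of `PGL(2,q)` on `PG(3,q)` that fixes the twisted cubic. -/
def symCubeGL : GL (Fin 2) R →* GL (Fin 4) R :=
  Units.map symCube

lemma coe_symCubeGL (g : GL (Fin 2) R) :
    (symCubeGL g : Matrix (Fin 4) (Fin 4) R) = symCube (g : Matrix (Fin 2) (Fin 2) R) :=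
  rfl

lemma veronese_smul (k : R) (p : Fin 2 → R) : veronese (k • p) = k ^ 3 • veronese p := by
  ext i
  fin_cases i <;> simp [veronese] <;> ring

lemma oscCoeff_smul (k : R) (p : Fin 2 → R) : oscCoeff (k • p) = k ^ 3 • oscCoeff p := by
  ext i
  fin_cases i <;> simp [oscCoeff] <;> ring

lemma veronese_ne_zero [IsReduced R] {p : Fin 2 → R} (hp : p ≠ 0) : veronese p ≠ 0 := by
  intro h
  have h0 : p 0 ^ 3 = 0 := congrFun h 0
  have h1 : p 1 ^ 3 = 0 := congrFun h 3
  apply hp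
  ext i
  fin_cases i
  exacts [eq_zero_of_pow_eq_zero h0, eq_zero_of_pow_eq_zero h1]

lemma symCube_smul (k : R) (g : Matrix (Fin 2) (Fin 2) R) :
    symCube (k • g) = k ^ 3 • symCube g := by
  ext i j
  fin_cases i <;> fin_cases j <;> simp [symCube] <;> ring

lemma veronese_vecMul_symCube (p : Fin 2 → R) (g : Matrix (Fin 2) (Fin 2) R) :
    veronese p ᵥ* symCube g = veronese (p ᵥ* g) := by
  ext i
  fin_cases i <;>
    simp [symCube, veronese, Matrix.vecMul, dotProduct, Fin.sum_univ_succ] <;> ring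

lemma oscCoeff_vecMul_dotProduct_vecMul_symCube (p : Fin 2 → R) (v : Fin 4 → R)
    (g : Matrix (Fin 2) (Fin 2) R) :
    oscCoeff (p ᵥ* g) ⬝ᵥ (v ᵥ* symCube g) = g.det ^ 3 * (oscCoeff p ⬝ᵥ v) := by
  simp [symCube, oscCoeff, Matrix.vecMul, dotProduct, Fin.sum_univ_succ, Matrix.det_fin_two]
  ring

/-- The quadrics `x₀x₂ = x₁²`, `x₁x₃ = x₂²` and `x₀x₃ = x₁x₂`, which cut out the
twisted cubic. -/
def OnCubicQuadrics (v : Fin 4 → R) : Prop :=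
  v 0 * v 2 = v 1 ^ 2 ∧ v 1 * v 3 = v 2 ^ 2 ∧ v 0 * v 3 = v 1 * v 2

lemma onCubicQuadrics_smul_veronese (k : R) (p : Fin 2 → R) :
    OnCubicQuadrics (k • veronese p) := by
  refine ⟨?_, ?_, ?_⟩ <;> simp [veronese] <;> ring

lemma middle_rows_of_forall_onCubicQuadrics [IsDomain R] (hR : 6 ≤ ENat.card R) {a d : R}
    (ha : a ≠ 0) (hd : d ≠ 0) {u v : Fin 4 → R}
    (h : ∀ t : R, OnCubicQuadrics
      ![a * t ^ 3 + u 0 * t ^ 2 + v 0 * t, u 1 * t ^ 2 + v 1 * t,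
        u 2 * t ^ 2 + v 2 * t, u 3 * t ^ 2 + v 3 * t + d]) :
    u = ![0, u 1, 0, 0] ∧ v = ![0, 0, v 2, 0] ∧ a * v 2 = u 1 ^ 2 ∧ a * d = u 1 * v 2 := by
  have coeff_zero {c : Fin 6 → R} (hc : ∀ t : R, ∑ i : Fin 6, t ^ (i : ℕ) * c i = 0) (i : Fin 6) :
      c i = 0 := congrFun (eq_zero_of_forall_sum_pow_mul_eq_zero hR hc) i
  have quadric₀₂ := coeff_zero (c := ![0, 0, v 0 * v 2 - v 1 ^ 2,
      u 0 * v 2 + v 0 * u 2 - 2 * u 1 * v 1, a * v 2 + u 0 * u 2 - u 1 ^ 2, a * u 2]) fun t => by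
    have hquadric := (h t).1
    simp only [Fin.sum_univ_six, Matrix.cons_val, Fin.coe_ofNat_eq_mod, Nat.reduceMod]
      at hquadric ⊢
    linear_combination hquadric
  have quadric₁₃ := coeff_zero (c := ![0, v 1 * d, u 1 * d + v 1 * v 3 - v 2 ^ 2,
      u 1 * v 3 + v 1 * u 3 - 2 * u 2 * v 2, u 1 * u 3 - u 2 ^ 2, 0]) fun t => by
    have hquadric := (h t).2.1
    simp only [Fin.sum_univ_six, Matrix.cons_val, Fin.coe_ofNat_eq_mod, Nat.reduceMod]
      at hquadric ⊢
    linear_combination hquadric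
  have quadric₀₃ := coeff_zero (c := ![0, v 0 * d, u 0 * d + v 0 * v 3 - v 1 * v 2,
      a * d + u 0 * v 3 + v 0 * u 3 - u 1 * v 2 - v 1 * u 2,
      a * v 3 + u 0 * u 3 - u 1 * u 2, a * u 3]) fun t => by
    have hquadric := (h t).2.2
    simp only [Fin.sum_univ_six, Matrix.cons_val, Fin.coe_ofNat_eq_mod, Nat.reduceMod]
      at hquadric ⊢
    linear_combination hquadric
  have v1 : v 1 = 0 := by simpa [hd] using quadric₁₃ 1
  have v0 : v 0 = 0 := by simpa [hd] using quadric₀₃ 1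
  have u2 : u 2 = 0 := by simpa [ha] using quadric₀₂ 5
  have u3 : u 3 = 0 := by simpa [ha] using quadric₀₃ 5
  have u0 : u 0 = 0 := by simpa [hd, v0, v1] using quadric₀₃ 2
  have v3 : v 3 = 0 := by simpa [ha, u0, u2] using quadric₀₃ 4
  refine ⟨?_, ?_, ?_, ?_⟩
  · ext i; fin_cases i <;> simp [u0, u2, u3]
  · ext i; fin_cases i <;> simp [v0, v1, v3]
  · simpa [u0, sub_eq_zero] using quadric₀₂ 4
  · simpa [u0, v0, v1, sub_eq_zero] using quadric₀₃ 3

end Algebra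

section Projectivities

variable {F : Type} [Field F]

lemma projAct_one : projAct F 1 = id := by
  funext W
  ext v
  simp [projAct]

lemma projAct_mul (A B : GL (Fin 4) F) (W : Submodule F (Fin 4 → F)) :
    projAct F (A * B) W = projAct F B (projAct F A W) := by
  unfold projAct
  rw [← Submodule.map_comp]
  congr 1
  exact LinearMap.ext fun v => by simp

lemma projAct_inv_projAct (A : GL (Fin 4) F) (W : Submodule F (Fin 4 → F)) :
    projAct F A⁻¹ (projAct F A W) = W := by
  rw [← projAct_mul, mul_inv_cancel, projAct_one, id]

lemma projAct_projAct_inv (A : GL (Fin 4) F) (W : Submodule F (Fin 4 → F)) :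
    projAct F A (projAct F A⁻¹ W) = W := by
  rw [← projAct_mul, inv_mul_cancel, projAct_one, id]

lemma projAct_eq_of_eq_smul {A B : GL (Fin 4) F} {k : F} (hk : k ≠ 0)
    (h : (A : Matrix (Fin 4) (Fin 4) F) = k • (B : Matrix (Fin 4) (Fin 4) F)) :
    projAct F A = projAct F B := by
  funext W
  have hlin : Matrix.vecMulLinear (A : Matrix (Fin 4) (Fin 4) F) =
      k • Matrix.vecMulLinear (B : Matrix (Fin 4) (Fin 4) F) := by
    ext1 v
    simp [h]
  rw [projAct, hlin, Submodule.map_smul _ _ _ hk, projAct]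

lemma projAct_le_projAct (A : GL (Fin 4) F) {V W : Submodule F (Fin 4 → F)} :
    projAct F A V ≤ projAct F A W ↔ V ≤ W :=
  Submodule.map_le_map_iff_of_injective (vecMulLinear_injective A) V W

lemma finrank_projAct (A : GL (Fin 4) F) (W : Submodule F (Fin 4 → F)) :
    Module.finrank F (projAct F A W) = Module.finrank F W :=
  (Submodule.equivMapOfInjective _ (vecMulLinear_injective A) W).finrank_eq.symm

lemma projAct_span_singleton (A : GL (Fin 4) F) (v : Fin 4 → F) :
    projAct F A (span F {v}) = span F {v ᵥ* (A : Matrix (Fin 4) (Fin 4) F)} := by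
  rw [projAct, Submodule.map_span, Set.image_singleton, Matrix.vecMulLinear_apply]

lemma vecMul_mem_projAct (A : GL (Fin 4) F) {W : Submodule F (Fin 4 → F)} {v : Fin 4 → F}
    (hv : v ∈ W) : v ᵥ* (A : Matrix (Fin 4) (Fin 4) F) ∈ projAct F A W :=
  Submodule.mem_map_of_mem hv

lemma projAct_mul_mem_Gq {A B : GL (Fin 4) F} (hA : projAct F A ∈ Gq F)
    (hB : projAct F B ∈ Gq F) : projAct F (A * B) ∈ Gq F := by
  refine ⟨⟨_, rfl⟩, ?_⟩
  have hcomp : projAct F (A * B) = projAct F B ∘ projAct F A := funext (projAct_mul A B)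
  rw [hcomp, Set.image_comp, hA.2, hB.2]

lemma id_mem_Gq : id ∈ Gq F :=
  ⟨⟨1, projAct_one.symm⟩, Set.image_id _⟩

lemma isUnisecant_of_mem_Gq {f : Submodule F (Fin 4 → F) → Submodule F (Fin 4 → F)}
    (hf : f ∈ Gq F) {ℓ : Submodule F (Fin 4 → F)} (hℓ : isUnisecant F ℓ) :
    isUnisecant F (f ℓ) := by
  obtain ⟨⟨A, rfl⟩, hA⟩ := hf
  obtain ⟨hrank, P, ⟨hPC, hPℓ⟩, hunique⟩ := hℓ
  refine ⟨(finrank_projAct A ℓ).trans hrank, projAct F A P,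
    ⟨hA ▸ Set.mem_image_of_mem _ hPC, (projAct_le_projAct A).2 hPℓ⟩, ?_⟩
  rintro Q ⟨hQC, hQℓ⟩
  rw [← hA] at hQC
  obtain ⟨Q, hQC, rfl⟩ := hQC
  rw [hunique Q ⟨hQC, (projAct_le_projAct A).1 hQℓ⟩]

end Projectivities

section TwistedCubic

variable {F : Type} [Field F]

lemma exists_eq_smul_of_ne_zero {p : Fin 2 → F} (hp : p ≠ 0) :
    ∃ k : F, k ≠ 0 ∧ ((∃ t : F, p = k • ![t, 1]) ∨ p = k • ![1, 0]) := by
  by_cases h1 : p 1 = 0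
  · have h0 : p 0 ≠ 0 := fun h0 => hp (by ext i; fin_cases i <;> simp [h0, h1])
    exact ⟨p 0, h0, .inr (by ext i; fin_cases i <;> simp [h1])⟩
  · refine ⟨p 1, h1, .inl ⟨p 0 / p 1, ?_⟩⟩
    ext i
    fin_cases i <;> simp [mul_div_cancel₀, h1]

lemma mem_twistedCubic_iff {P : Submodule F (Fin 4 → F)} :
    P ∈ twistedCubic F ↔ ∃ p : Fin 2 → F, p ≠ 0 ∧ P = span F {veronese p} := by
  constructor
  · rintro ⟨v, ⟨t, rfl⟩ | rfl, rfl⟩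
    · exact ⟨![t, 1], by simp, by simp [veronese]⟩
    · exact ⟨![1, 0], by simp, by simp [veronese]⟩
  · rintro ⟨p, hp, rfl⟩
    obtain ⟨k, hk, ⟨t, rfl⟩ | rfl⟩ := exists_eq_smul_of_ne_zero hp <;>
      rw [veronese_smul, span_singleton_smul_eq (hk.isUnit.pow 3)]
    · exact ⟨_, .inl ⟨t, rfl⟩, by simp [veronese]⟩
    · exact ⟨_, .inr rfl, by simp [veronese]⟩

lemma span_veronese_mem_twistedCubic {p : Fin 2 → F} (hp : p ≠ 0) :
    span F {veronese p} ∈ twistedCubic F :=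
  mem_twistedCubic_iff.2 ⟨p, hp, rfl⟩

lemma mem_planeOf {c v : Fin 4 → F} : v ∈ planeOf F c ↔ c ⬝ᵥ v = 0 := by
  simp [planeOf, planeForm, dotProduct, Fin.sum_univ_four]

lemma planeOf_smul {k : F} (hk : k ≠ 0) (c : Fin 4 → F) : planeOf F (k • c) = planeOf F c := by
  ext v
  simp [mem_planeOf, hk]

lemma isOscPlane_iff {π : Submodule F (Fin 4 → F)} :
    isOscPlane F π ↔ ∃ p : Fin 2 → F, p ≠ 0 ∧ π = planeOf F (oscCoeff p) := by
  have at_infinity : planeOf F (oscCoeff ![1, 0]) = oscPlaneInf F := by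
    rw [oscPlaneInf, ← planeOf_smul (neg_ne_zero.2 one_ne_zero)]
    simp [oscCoeff]
  constructor
  · rintro (⟨t, rfl⟩ | rfl)
    · exact ⟨![t, 1], by simp, by simp [oscPlane, oscCoeff]⟩
    · exact ⟨![1, 0], by simp, at_infinity.symm⟩
  · rintro ⟨p, hp, rfl⟩
    obtain ⟨k, hk, ⟨t, rfl⟩ | rfl⟩ := exists_eq_smul_of_ne_zero hp <;>
      rw [oscCoeff_smul, planeOf_smul (pow_ne_zero 3 hk)]
    · exact .inl ⟨t, by simp [oscPlane, oscCoeff]⟩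
    · exact .inr at_infinity

lemma exists_isOscPlane_ge_of_isTangent {ℓ : Submodule F (Fin 4 → F)} (h : isTangent F ℓ) :
    ∃ π, isOscPlane F π ∧ ℓ ≤ π := by
  rcases h with ⟨t, rfl⟩ | rfl
  · refine ⟨_, .inl ⟨t, rfl⟩, ?_⟩
    rw [tangentAt, span_le]
    rintro v (rfl | rfl) <;> simp [oscPlane, planeOf, planeForm] <;> ring
  · refine ⟨_, .inr rfl, ?_⟩
    rw [tangentAtInf, span_le]
    rintro v (rfl | rfl) <;> simp [oscPlaneInf, planeOf, planeForm]

lemma isUnGamma_iff {ℓ : Submodule F (Fin 4 → F)} :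
    isUnGamma F ℓ ↔
      isUnisecant F ℓ ∧ ∀ p : Fin 2 → F, p ≠ 0 → ¬ ℓ ≤ planeOf F (oscCoeff p) := by
  constructor
  · rintro ⟨huni, -, hosc⟩
    exact ⟨huni, fun p hp => hosc _ (isOscPlane_iff.2 ⟨p, hp, rfl⟩)⟩
  · rintro ⟨huni, hosc⟩
    have hosc' : ∀ π, isOscPlane F π → ¬ ℓ ≤ π := by
      intro π hπ
      obtain ⟨p, hp, rfl⟩ := isOscPlane_iff.1 hπ
      exact hosc p hp
    refine ⟨huni, fun htan => ?_, hosc'⟩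
    obtain ⟨π, hπ, hle⟩ := exists_isOscPlane_ge_of_isTangent htan
    exact hosc' π hπ hle

lemma projAct_symCubeGL_mem_Gq (g : GL (Fin 2) F) : projAct F (symCubeGL g) ∈ Gq F := by
  have hmaps (g : GL (Fin 2) F) {P} (hP : P ∈ twistedCubic F) :
      projAct F (symCubeGL g) P ∈ twistedCubic F := by
    obtain ⟨p, hp, rfl⟩ := mem_twistedCubic_iff.1 hP
    rw [projAct_span_singleton, coe_symCubeGL, veronese_vecMul_symCube]
    exact span_veronese_mem_twistedCubic (vecMul_ne_zero g hp)
  refine ⟨⟨_, rfl⟩, Set.Subset.antisymm (Set.image_subset_iff.2 fun P => hmaps g) ?_⟩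
  intro P hP
  refine ⟨projAct F (symCubeGL g⁻¹) P, hmaps g⁻¹ hP, ?_⟩
  rw [map_inv, projAct_projAct_inv]

lemma projAct_symCubeGL_le_planeOf (g : GL (Fin 2) F) {ℓ : Submodule F (Fin 4 → F)}
    {p : Fin 2 → F} (h : ℓ ≤ planeOf F (oscCoeff p)) :
    projAct F (symCubeGL g) ℓ ≤
      planeOf F (oscCoeff (p ᵥ* (g : Matrix (Fin 2) (Fin 2) F))) := by
  rintro _ ⟨v, hv, rfl⟩
  rw [mem_planeOf, Matrix.vecMulLinear_apply, coe_symCubeGL,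
    oscCoeff_vecMul_dotProduct_vecMul_symCube, mem_planeOf.1 (h hv), mul_zero]

lemma isUnGamma_projAct_symCubeGL (g : GL (Fin 2) F) {ℓ : Submodule F (Fin 4 → F)}
    (hℓ : isUnGamma F ℓ) : isUnGamma F (projAct F (symCubeGL g) ℓ) := by
  rw [isUnGamma_iff] at hℓ ⊢
  refine ⟨isUnisecant_of_mem_Gq (projAct_symCubeGL_mem_Gq g) hℓ.1, fun p hp hle => ?_⟩
  apply hℓ.2 _ (vecMul_ne_zero g⁻¹ hp)
  simpa only [map_inv, projAct_inv_projAct] using projAct_symCubeGL_le_planeOf g⁻¹ hle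

lemma exists_GL_vecMul_eq {p₀ p₁ : Fin 2 → F} (h : LinearIndependent F ![p₀, p₁]) :
    ∃ g : GL (Fin 2) F, ![1, 0] ᵥ* (g : Matrix (Fin 2) (Fin 2) F) = p₀ ∧
      ![0, 1] ᵥ* (g : Matrix (Fin 2) (Fin 2) F) = p₁ := by
  obtain ⟨g, hg⟩ : IsUnit (Matrix.of ![p₀, p₁]) :=
    Matrix.linearIndependent_rows_iff_isUnit.1 h
  exact ⟨g, by simp [hg], by simp [hg]⟩

end TwistedCubic

section Gq

variable {F : Type} [Field F]

lemma exists_vecMul_eq_smul_veronese {A : GL (Fin 4) F} (hA : projAct F A ∈ Gq F)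
    {p : Fin 2 → F} (hp : p ≠ 0) :
    ∃ k : F, k ≠ 0 ∧ ∃ p' : Fin 2 → F, p' ≠ 0 ∧
      veronese p ᵥ* (A : Matrix (Fin 4) (Fin 4) F) = k • veronese p' := by
  have hmem : projAct F A (span F {veronese p}) ∈ twistedCubic F :=
    hA.2 ▸ Set.mem_image_of_mem _ (span_veronese_mem_twistedCubic hp)
  rw [projAct_span_singleton] at hmem
  obtain ⟨p', hp', hspan⟩ := mem_twistedCubic_iff.1 hmem
  obtain ⟨k, hk⟩ := mem_span_singleton.1 (hspan ▸ mem_span_singleton_self _)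
  refine ⟨k, ?_, p', hp', hk.symm⟩
  rintro rfl
  apply veronese_ne_zero hp
  apply vecMulLinear_injective A
  simp [← hk]

lemma exists_eq_diagonal_of_fixes_two_points (hF : 6 ≤ ENat.card F) {B : GL (Fin 4) F}
    (hB : projAct F B ∈ Gq F) {a d : F} (ha : a ≠ 0) (hd : d ≠ 0)
    (hinf : veronese ![1, 0] ᵥ* (B : Matrix (Fin 4) (Fin 4) F) = a • veronese ![1, 0])
    (hzero : veronese ![0, 1] ᵥ* (B : Matrix (Fin 4) (Fin 4) F) = d • veronese ![0, 1]) :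
    ∃ b c : F, (B : Matrix (Fin 4) (Fin 4) F) = Matrix.diagonal ![a, b, c, d] ∧
      a * c = b ^ 2 ∧ a * d = b * c := by
  have row₀ : B.1 0 = ![a, 0, 0, 0] := by
    simpa [veronese, Matrix.vecMul_eq_sum, Fin.sum_univ_succ] using hinf
  have row₃ : B.1 3 = ![0, 0, 0, d] := by
    simpa [veronese, Matrix.vecMul_eq_sum, Fin.sum_univ_succ] using hzero
  have image_eq (t : F) : veronese ![t, 1] ᵥ* B.1 =
      ![a * t ^ 3 + B.1 1 0 * t ^ 2 + B.1 2 0 * t, B.1 1 1 * t ^ 2 + B.1 2 1 * t,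
        B.1 1 2 * t ^ 2 + B.1 2 2 * t, B.1 1 3 * t ^ 2 + B.1 2 3 * t + d] := by
    ext i
    fin_cases i <;>
      simp [veronese, Matrix.vecMul, dotProduct, Fin.sum_univ_succ, row₀, row₃] <;> ring
  obtain ⟨row₁, row₂, hsq, hmul⟩ := middle_rows_of_forall_onCubicQuadrics hF ha hd
    (u := B.1 1) (v := B.1 2) fun t => by
      obtain ⟨k, -, p, -, himage⟩ := exists_vecMul_eq_smul_veronese hB (p := ![t, 1]) (by simp)
      rw [← image_eq, himage]
      exact onCubicQuadrics_smul_veronese k p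
  refine ⟨B.1 1 1, B.1 2 2, ?_, hsq, hmul⟩
  generalize B.1 1 1 = b, B.1 2 2 = c at row₁ row₂
  ext i j
  fin_cases i <;> fin_cases j <;> simp [row₀, row₁, row₂, row₃]

lemma exists_diagonal_eq_smul_symCube {a b c d : F} (ha : a ≠ 0) (hd : d ≠ 0)
    (hsq : a * c = b ^ 2) (hmul : a * d = b * c) :
    ∃ g : GL (Fin 2) F,
      Matrix.diagonal ![a, b, c, d] = a • symCube (g : Matrix (Fin 2) (Fin 2) F) := by
  obtain ⟨m, rfl⟩ : ∃ m, b = a * m := ⟨b / a, (mul_div_cancel₀ b ha).symm⟩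
  obtain rfl : c = a * m ^ 2 := mul_left_cancel₀ ha (by linear_combination hsq)
  obtain rfl : d = a * m ^ 3 := mul_left_cancel₀ ha (by linear_combination hmul)
  have hm : m ≠ 0 := by
    rintro rfl
    simp at hd
  refine ⟨.mkOfDetNeZero !![1, 0; 0, m] (by simpa using hm), ?_⟩
  ext i j
  fin_cases i <;> fin_cases j <;> simp [symCube, Matrix.GeneralLinearGroup.mkOfDetNeZero]

lemma exists_eq_projAct_symCubeGL (hF : 6 ≤ ENat.card F)
    {f : Submodule F (Fin 4 → F) → Submodule F (Fin 4 → F)} (hf : f ∈ Gq F) :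
    ∃ g : GL (Fin 2) F, f = projAct F (symCubeGL g) := by
  obtain ⟨A, rfl⟩ := hf.1
  obtain ⟨k₀, hk₀, p₀, hp₀, himage₀⟩ := exists_vecMul_eq_smul_veronese hf (p := ![1, 0]) (by simp)
  obtain ⟨k₁, hk₁, p₁, -, himage₁⟩ := exists_vecMul_eq_smul_veronese hf (p := ![0, 1]) (by simp)
  have hindep : LinearIndependent F ![p₀, p₁] := by
    rw [LinearIndependent.pair_iff' hp₀]
    rintro c rfl
    have heq : k₀ • veronese ![(0 : F), 1] = (k₁ * c ^ 3) • veronese ![1, 0] := by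
      apply vecMulLinear_injective A
      simp only [map_smul, Matrix.vecMulLinear_apply, himage₀, himage₁, veronese_smul, smul_smul]
      congr 1
      ring
    exact hk₀ (by simpa [veronese] using congrFun heq 3)
  obtain ⟨g, hg₀, hg₁⟩ := exists_GL_vecMul_eq hindep
  have hfix {e p : Fin 2 → F} {k : F} (hA : veronese e ᵥ* A.1 = k • veronese p)
      (hg : e ᵥ* g.1 = p) : veronese e ᵥ* (A * symCubeGL g⁻¹).1 = k • veronese e := by
    rw [Units.val_mul, ← Matrix.vecMul_vecMul, hA, Matrix.smul_vecMul, coe_symCubeGL,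
      veronese_vecMul_symCube, ← hg, Matrix.vecMul_vecMul, Units.mul_inv, Matrix.vecMul_one]
  obtain ⟨b, c, hdiag, hsq, hmul⟩ := exists_eq_diagonal_of_fixes_two_points hF
    (projAct_mul_mem_Gq hf (projAct_symCubeGL_mem_Gq g⁻¹)) hk₀ hk₁
    (hfix himage₀ hg₀) (hfix himage₁ hg₁)
  obtain ⟨h, hh⟩ := exists_diagonal_eq_smul_symCube hk₀ hk₁ hsq hmul
  refine ⟨h * g, projAct_eq_of_eq_smul hk₀ ?_⟩
  calc A.1 = (A * symCubeGL g⁻¹ * symCubeGL g).1 := by simp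
    _ = k₀ • (symCubeGL (h * g)).1 := by
      rw [Units.val_mul, hdiag, hh, map_mul, Units.val_mul, coe_symCubeGL h, Matrix.smul_mul]

lemma mem_lineOrbit_iff (hF : 6 ≤ ENat.card F) {ℓ m : Submodule F (Fin 4 → F)} :
    m ∈ lineOrbit F ℓ ↔ ∃ g : GL (Fin 2) F, projAct F (symCubeGL g) ℓ = m := by
  constructor
  · rintro ⟨f, hf, rfl⟩
    obtain ⟨g, rfl⟩ := exists_eq_projAct_symCubeGL hF hf
    exact ⟨g, rfl⟩
  · rintro ⟨g, rfl⟩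
    exact ⟨_, projAct_symCubeGL_mem_Gq g, rfl⟩

lemma projAct_symCubeGL_scalar (c : Fˣ) :
    projAct F (symCubeGL (Matrix.GeneralLinearGroup.scalar (Fin 2) c)) = id := by
  rw [← projAct_one]
  refine projAct_eq_of_eq_smul (pow_ne_zero 3 c.ne_zero) ?_
  rw [coe_symCubeGL, Matrix.GeneralLinearGroup.coe_scalar, Matrix.scalar_apply,
    ← Matrix.smul_one_eq_diagonal, symCube_smul, map_one, Units.val_one]

end Gq

section BaseLine

variable (F : Type) [Field F]

/-- The line through `P(0) = (0:0:0:1)` and `(1:0:1:0)`, the representative of the orbit of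
`UnΓ`-lines. -/
def baseLine : Submodule F (Fin 4 → F) :=
  span F {![0, 0, 0, 1], ![1, 0, 1, 0]}

variable {F}

lemma mem_baseLine {v : Fin 4 → F} : v ∈ baseLine F ↔ v 1 = 0 ∧ v 0 = v 2 := by
  rw [baseLine, mem_span_pair]
  constructor
  · rintro ⟨a, b, rfl⟩
    simp
  · rintro ⟨h1, h02⟩
    refine ⟨v 3, v 0, ?_⟩
    ext i
    fin_cases i <;> simp [h1, h02]

lemma veronese_mem_baseLine {p : Fin 2 → F} : veronese p ∈ baseLine F ↔ p 0 = 0 := by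
  rw [mem_baseLine]
  constructor
  · rintro ⟨h1, h02⟩
    have h1 : p 0 ^ 2 * p 1 = 0 := h1
    have h02 : p 0 ^ 3 = p 0 * p 1 ^ 2 := h02
    refine pow_eq_zero_iff (n := 4) four_ne_zero |>.1 ?_
    linear_combination p 0 * h02 + p 1 * h1
  · intro h
    simp [veronese, h]

lemma finrank_baseLine : Module.finrank F (baseLine F) = 2 := by
  have hindep : LinearIndependent F ![(![0, 0, 0, 1] : Fin 4 → F), ![1, 0, 1, 0]] := by
    rw [LinearIndependent.pair_iff' (by simp)]
    intro a h
    simpa using congrFun h 0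
  have h := finrank_span_eq_card hindep
  rwa [Matrix.range_cons, Matrix.range_cons, Matrix.range_empty, Set.union_empty,
    Set.singleton_union, Fintype.card_fin] at h

lemma isUnisecant_baseLine : isUnisecant F (baseLine F) := by
  refine ⟨finrank_baseLine, span F {veronese ![0, 1]},
    ⟨span_veronese_mem_twistedCubic (by simp), ?_⟩, ?_⟩
  · simp [veronese_mem_baseLine]
  · rintro Q ⟨hQC, hQℓ⟩
    obtain ⟨p, hp, rfl⟩ := mem_twistedCubic_iff.1 hQC
    have hp0 : p 0 = 0 := veronese_mem_baseLine.1 (hQℓ (mem_span_singleton_self _))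
    have hp_eq : p = p 1 • ![0, 1] := by
      ext i
      fin_cases i <;> simp [hp0]
    have hp1 : p 1 ≠ 0 := fun h => hp (by rw [hp_eq, h, zero_smul])
    rw [hp_eq, veronese_smul, span_singleton_smul_eq (hp1.isUnit.pow 3)]

lemma isUnGamma_baseLine : isUnGamma F (baseLine F) := by
  refine isUnGamma_iff.2 ⟨isUnisecant_baseLine, fun p hp hle => hp ?_⟩
  have hp0 : p 0 = 0 := by
    have h := mem_planeOf.1 (hle ((mem_baseLine (v := ![0, 0, 0, 1])).2 (by simp)))
    simpa [oscCoeff, dotProduct, Fin.sum_univ_succ] using h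
  have hp1 : p 1 = 0 := by
    have h := mem_planeOf.1 (hle ((mem_baseLine (v := ![1, 0, 1, 0])).2 (by simp)))
    simpa [oscCoeff, dotProduct, Fin.sum_univ_succ, hp0] using h
  ext i
  fin_cases i
  exacts [hp0, hp1]

lemma exists_forall_mem_of_isUnGamma {ℓ : Submodule F (Fin 4 → F)} (hℓ : isUnGamma F ℓ)
    (hmem : veronese ![0, 1] ∈ ℓ) :
    ∃ b c : F, c ≠ b ^ 2 ∧ ∀ e : F, ![1, b, c, e] ∈ ℓ := by
  obtain ⟨⟨-, P, -, hunique⟩, hosc⟩ := isUnGamma_iff.1 hℓ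
  obtain ⟨v, hv, hv0⟩ : ∃ v ∈ ℓ, v 0 ≠ 0 := by
    have h := hosc ![0, 1] (by simp)
    simpa [SetLike.le_def, mem_planeOf, oscCoeff, dotProduct, Fin.sum_univ_succ] using h
  have hline (e : F) : ![1, v 1 / v 0, v 2 / v 0, e] ∈ ℓ := by
    have hcomb : ![1, v 1 / v 0, v 2 / v 0, e] =
        (v 0)⁻¹ • v + (e - v 3 / v 0) • veronese ![0, 1] := by
      ext i
      fin_cases i <;> simp [veronese, hv0] <;> ring
    rw [hcomb]
    exact ℓ.add_mem (ℓ.smul_mem _ hv) (ℓ.smul_mem _ hmem)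
  refine ⟨v 1 / v 0, v 2 / v 0, fun hsq => ?_, hline⟩
  have hmem' : veronese ![1, v 1 / v 0] ∈ ℓ := by
    simpa [veronese, hsq] using hline ((v 1 / v 0) ^ 3)
  have hspan : span F {veronese ![1, v 1 / v 0]} = span F {veronese ![0, 1]} :=
    (hunique _ ⟨span_veronese_mem_twistedCubic (by simp), by simpa using hmem'⟩).trans
      (hunique _ ⟨span_veronese_mem_twistedCubic (by simp), by simpa using hmem⟩).symm
  obtain ⟨k, hk⟩ := mem_span_singleton.1 (hspan ▸ mem_span_singleton_self _)
  simpa [veronese] using congrFun hk 0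

lemma exists_projAct_baseLine_eq_of_veronese_mem (hsq : ∀ x : F, IsSquare x)
    {ℓ : Submodule F (Fin 4 → F)} (hℓ : isUnGamma F ℓ) (hmem : veronese ![0, 1] ∈ ℓ) :
    ∃ g : GL (Fin 2) F, projAct F (symCubeGL g) (baseLine F) = ℓ := by
  obtain ⟨b, c, hc, hline⟩ := exists_forall_mem_of_isUnGamma hℓ hmem
  obtain ⟨α, hα⟩ := hsq (c - b ^ 2)
  have hα0 : α ≠ 0 := by
    rintro rfl
    exact hc (by linear_combination hα)
  let g : GL (Fin 2) F := .mkOfDetNeZero !![1, b; 0, α] (by simpa using hα0)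
  refine ⟨g, eq_of_le_of_finrank_eq ?_ ?_⟩
  · rw [projAct, baseLine, map_span_le]
    rintro v (rfl | rfl)
    · have himage : ![0, 0, 0, 1] ᵥ* symCube g.1 = α ^ 3 • veronese ![0, 1] := by
        simp [g, symCube, veronese, Matrix.GeneralLinearGroup.mkOfDetNeZero]
      rw [Matrix.vecMulLinear_apply, coe_symCubeGL, himage]
      exact ℓ.smul_mem _ hmem
    · have himage : ![1, 0, 1, 0] ᵥ* symCube g.1 = ![1, b, c, b ^ 3 + 3 * b * α ^ 2] := by
        have : c = b ^ 2 + α ^ 2 := by linear_combination hα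
        simp [g, symCube, this, Matrix.GeneralLinearGroup.mkOfDetNeZero]
      rw [Matrix.vecMulLinear_apply, coe_symCubeGL, himage]
      exact hline _
  · rw [finrank_projAct, finrank_baseLine, hℓ.1.1]

lemma isUnGamma_iff_exists_projAct_baseLine_eq (hsq : ∀ x : F, IsSquare x)
    {ℓ : Submodule F (Fin 4 → F)} :
    isUnGamma F ℓ ↔ ∃ g : GL (Fin 2) F, projAct F (symCubeGL g) (baseLine F) = ℓ := by
  refine ⟨fun hℓ => ?_, ?_⟩
  · obtain ⟨-, P, ⟨hPC, hPℓ⟩, -⟩ := hℓ.1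
    obtain ⟨p, hp, rfl⟩ := mem_twistedCubic_iff.1 hPC
    obtain ⟨p', hindep⟩ := exists_linearIndependent_pair_of_one_lt_finrank (R := F) (by simp) hp
    rw [LinearIndependent.pair_symm_iff] at hindep
    obtain ⟨g, -, hg⟩ := exists_GL_vecMul_eq hindep
    have hmem : veronese ![0, 1] ∈ projAct F (symCubeGL g⁻¹) ℓ := by
      have h := vecMul_mem_projAct (symCubeGL g⁻¹) (hPℓ (mem_span_singleton_self _))
      rwa [coe_symCubeGL, veronese_vecMul_symCube, ← hg, Matrix.vecMul_vecMul, Units.mul_inv,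
        Matrix.vecMul_one] at h
    obtain ⟨h, hh⟩ := exists_projAct_baseLine_eq_of_veronese_mem hsq
      (isUnGamma_projAct_symCubeGL g⁻¹ hℓ) hmem
    refine ⟨h * g, ?_⟩
    rw [map_mul, projAct_mul, hh, map_inv, projAct_projAct_inv]
  · rintro ⟨g, rfl⟩
    exact isUnGamma_projAct_symCubeGL g isUnGamma_baseLine

lemma projAct_baseLine_eq_iff [CharP F 2] {g : GL (Fin 2) F} :
    projAct F (symCubeGL g) (baseLine F) = baseLine F ↔
      g ∈ (Matrix.GeneralLinearGroup.scalar (Fin 2)).range := by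
  constructor
  · intro hg
    have maps {v : Fin 4 → F} (hv : v ∈ baseLine F) : v ᵥ* symCube g.1 ∈ baseLine F :=
      hg ▸ vecMul_mem_projAct (symCubeGL g) hv
    have h10 : g 1 0 = 0 := by
      have h := maps ((veronese_mem_baseLine (p := ![0, 1])).2 rfl)
      rw [veronese_vecMul_symCube, veronese_mem_baseLine] at h
      simpa [Matrix.vecMul, dotProduct] using h
    have hg00 : g 0 0 ≠ 0 := fun h00 => g.det_ne_zero (by simp [Matrix.det_fin_two, h00, h10])
    obtain ⟨himage₁, himage₀₂⟩ : g 0 0 ^ 2 * g 0 1 = 0 ∧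
        g 0 0 ^ 3 = g 0 0 * g 0 1 ^ 2 + g 0 0 * g 1 1 ^ 2 := by
      simpa [mem_baseLine, symCube, h10] using
        maps ((mem_baseLine (v := ![1, 0, 1, 0])).2 (by simp))
    have h01 : g 0 1 = 0 := by simpa [hg00] using himage₁
    have h00 : g 0 0 = g 1 1 := by
      apply CharTwo.sq_injective
      apply mul_left_cancel₀ hg00
      linear_combination himage₀₂ + g 0 0 * g 0 1 * h01
    refine ⟨Units.mk0 (g 0 0) hg00, Units.ext ?_⟩
    ext i j
    fin_cases i <;> fin_cases j <;> simp [h01, h10, h00]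
  · rintro ⟨c, rfl⟩
    rw [projAct_symCubeGL_scalar, id]

/-- The action of `GL₂` on subspaces of `F⁴` through the symmetric cube. The matrices act on row
vectors, hence from the right, and the inverse turns this into a left action. -/
@[reducible]
def symCubeMulAction : MulAction (GL (Fin 2) F) (Submodule F (Fin 4 → F)) where
  smul g W := projAct F (symCubeGL g⁻¹) W
  one_smul W := by
    change projAct F (symCubeGL 1⁻¹) W = W
    rw [inv_one, map_one, projAct_one, id]
  mul_smul g h W := by
    change projAct F (symCubeGL (g * h)⁻¹) W = _
    rw [_root_.mul_inv_rev, map_mul, projAct_mul]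
    rfl

lemma orbit_baseLine (hsq : ∀ x : F, IsSquare x) :
    letI := symCubeMulAction (F := F)
    MulAction.orbit (GL (Fin 2) F) (baseLine F) = {ℓ | isUnGamma F ℓ} := by
  ext ℓ
  rw [Set.mem_ofPred_eq, isUnGamma_iff_exists_projAct_baseLine_eq hsq]
  exact (Equiv.inv (GL (Fin 2) F)).exists_congr fun _ => Iff.rfl

lemma stabilizer_baseLine [CharP F 2] :
    letI := symCubeMulAction (F := F)
    MulAction.stabilizer (GL (Fin 2) F) (baseLine F) =
      (Matrix.GeneralLinearGroup.scalar (Fin 2)).range := by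
  ext g
  rw [← inv_mem_iff (x := g) (H := MonoidHom.range _)]
  exact projAct_baseLine_eq_iff

lemma ncard_setOf_isUnGamma [Fintype F] [CharP F 2] :
    {ℓ : Submodule F (Fin 4 → F) | isUnGamma F ℓ}.ncard =
      Fintype.card F ^ 3 - Fintype.card F := by
  let _ := symCubeMulAction (F := F)
  have horbit := Subgroup.card_mul_index (MulAction.stabilizer (GL (Fin 2) F) (baseLine F))
  rw [MulAction.index_stabilizer,
    orbit_baseLine (FiniteField.isSquare_of_char_two (ringChar.eq F 2)),
    stabilizer_baseLine, card_range_scalar, Matrix.card_GL_field] at horbit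
  obtain ⟨n, hn⟩ : ∃ n, Fintype.card F = n + 1 := Nat.exists_eq_add_one.2 Fintype.card_pos
  have hn0 : 0 < n := by
    have := Fintype.one_lt_card (α := F)
    lia
  rw [hn] at horbit ⊢
  apply Nat.eq_of_mul_eq_mul_left hn0
  calc n * _ = ((n + 1) ^ 2 - 1) * ((n + 1) ^ 2 - (n + 1)) := by
        simpa [Fin.prod_univ_two] using horbit
    _ = (n * (n + 2)) * (n * (n + 1)) := by
        congr 1 <;> exact Nat.sub_eq_of_eq_add (by ring)
    _ = n * ((n + 1) ^ 3 - (n + 1)) := by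
        rw [Nat.sub_eq_of_eq_add (c := n * (n + 1) * (n + 2)) (by ring)]
        ring

lemma lineStab_eq_singleton_id [CharP F 2] (hsq : ∀ x : F, IsSquare x) (hF : 6 ≤ ENat.card F)
    {ℓ : Submodule F (Fin 4 → F)} (hℓ : isUnGamma F ℓ) : lineStab F ℓ = {id} := by
  obtain ⟨h, rfl⟩ := (isUnGamma_iff_exists_projAct_baseLine_eq hsq).1 hℓ
  refine Set.eq_singleton_iff_unique_mem.2 ⟨⟨id_mem_Gq, rfl⟩, ?_⟩
  rintro f ⟨hf, hfix⟩
  obtain ⟨g, rfl⟩ := exists_eq_projAct_symCubeGL hF hf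
  have hconj : projAct F (symCubeGL (h * g * h⁻¹)) (baseLine F) = baseLine F := by
    rw [map_mul, map_mul, projAct_mul, projAct_mul, hfix, map_inv, projAct_inv_projAct]
  obtain ⟨c, hc⟩ := projAct_baseLine_eq_iff.1 hconj
  have hg : g = Matrix.GeneralLinearGroup.scalar (Fin 2) c := by
    rw [eq_mul_inv_iff_mul_eq, Matrix.GeneralLinearGroup.scalar_commute] at hc
    exact (mul_left_cancel hc).symm
  rw [hg, projAct_symCubeGL_scalar]

end BaseLine

theorem stmt_13 (q : ℕ) (F : Type) [Field F] [Fintype F]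
    (hcard : Fintype.card F = q) (hq : 8 ≤ q) (hev : Even q) :
    {ℓ : Submodule F (Fin 4 → F) | isUnGamma F ℓ} = lineOrbit F (Submodule.span F ({![0, 0, 0, 1], ![1, 0, 1, 0]} : Set (Fin 4 → F))) ∧
    {ℓ : Submodule F (Fin 4 → F) | isUnGamma F ℓ}.ncard = q ^ 3 - q ∧
    ∀ ℓ : Submodule F (Fin 4 → F), isUnGamma F ℓ → lineStab F ℓ = {id} := by
  subst hcard
  have hchar : ringChar F = 2 := FiniteField.even_card_iff_char_two.2 (Nat.even_iff.1 hev)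
  have hsq : ∀ x : F, IsSquare x := FiniteField.isSquare_of_char_two hchar
  have : CharP F 2 := ringChar.of_eq hchar
  have hF : 6 ≤ ENat.card F := by
    rw [ENat.card_eq_coe_fintype_card]
    exact_mod_cast (by lia : 6 ≤ Fintype.card F)
  refine ⟨?_, ncard_setOf_isUnGamma, fun ℓ hℓ => lineStab_eq_singleton_id hsq hF hℓ⟩
  ext ℓ
  rw [mem_lineOrbit_iff hF]
  exact isUnGamma_iff_exists_projAct_baseLine_eq hsq
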